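/- Let u be a single positive integer. A word w lies in C(u) if and only if the insertion tableau P = P(w) with rows R_1,...,R_l satisfies: (a) every entry of the first row R_1 is at most u, and (b) for every i ≥ 1, the number of entries of R_i strictly less than u equals the number of entries of R_{i+1} at most u. -/

import Mathlib

namespace Plactic

/-- Insert `x` into a weakly increasing row, returning the new row and the bumped entry. -/
def rowInsert (x : ℕ) : List ℕ → List ℕ × Option ℕ
  | [] => ([x], none)
  | y :: ys =>
    if x < y then (x :: ys, some y)
    else
      let p := rowInsert x ys
      (y :: p.1, p.2)

/-- RSK insertion of `x` into a tableau given as a list of rows. -/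
def tInsert (x : ℕ) : List (List ℕ) → List (List ℕ)
  | [] => [[x]]
  | r :: rs =>
    match rowInsert x r with
    | (r', none) => r' :: rs
    | (r', some y) => r' :: tInsert y rs

/-- The RSK insertion tableau of a word. -/
def P (w : List ℕ) : List (List ℕ) := w.foldl (fun t x => tInsert x t) []

/-- The `i`-th row (0-indexed) of the insertion tableau of `w`. -/
def row (w : List ℕ) (i : ℕ) : List ℕ := (P w).getD i []

/-- The `j`-th column (0-indexed) of a tableau, read top to bottom. -/
def col (T : List (List ℕ)) (j : ℕ) : List ℕ := T.filterMap (fun r => r[j]?)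

/-- An elementary Knuth transposition. -/
inductive KStep : List ℕ → List ℕ → Prop
  | k1 (x y : List ℕ) (a b c : ℕ) : a ≤ b → b < c →
      KStep (x ++ [a, c, b] ++ y) (x ++ [c, a, b] ++ y)
  | k2 (x y : List ℕ) (a b c : ℕ) : a < b → b ≤ c →
      KStep (x ++ [b, a, c] ++ y) (x ++ [b, c, a] ++ y)

/-- Knuth equivalence: the equivalence relation generated by Knuth transpositions. -/
def KEquiv : List ℕ → List ℕ → Prop := Relation.EqvGen KStep

/-- The centralizer of `u` in the plactic monoid. -/
def Cent (u : List ℕ) : Set (List ℕ) := {w | KEquiv (u ++ w) (w ++ u)}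

end Plactic

namespace Plactic

/-! ### Knuth equivalence as a congruence -/

namespace KEquiv

theorem refl (v : List ℕ) : KEquiv v v := Relation.EqvGen.refl v

theorem of_eq {v w : List ℕ} (h : v = w) : KEquiv v w := h ▸ refl v

theorem symm {v w : List ℕ} (h : KEquiv v w) : KEquiv w v := Relation.EqvGen.symm _ _ h

theorem trans {v w z : List ℕ} (h : KEquiv v w) (h' : KEquiv w z) : KEquiv v z :=
  Relation.EqvGen.trans _ _ _ h h'

theorem append_context {v w : List ℕ} (x y : List ℕ) (h : KEquiv v w) :
    KEquiv (x ++ v ++ y) (x ++ w ++ y) := by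
  induction h with
  | rel v w h =>
    refine Relation.EqvGen.rel _ _ ?_
    cases h with
    | k1 x' y' a b c h1 h2 => simpa using KStep.k1 (x ++ x') (y' ++ y) a b c h1 h2
    | k2 x' y' a b c h1 h2 => simpa using KStep.k2 (x ++ x') (y' ++ y) a b c h1 h2
  | refl v => exact refl _
  | symm v w _ ih => exact ih.symm
  | trans v w z _ _ ih1 ih2 => exact ih1.trans ih2

theorem append_left {v w : List ℕ} (x : List ℕ) (h : KEquiv v w) : KEquiv (x ++ v) (x ++ w) := by
  simpa using h.append_context x []

theorem append_right {v w : List ℕ} (y : List ℕ) (h : KEquiv v w) : KEquiv (v ++ y) (w ++ y) := by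
  simpa using h.append_context [] y

theorem cons {v w : List ℕ} (x : ℕ) (h : KEquiv v w) : KEquiv (x :: v) (x :: w) :=
  h.append_left [x]

theorem swap_left {a b c : ℕ} (h1 : a ≤ b) (h2 : b < c) : KEquiv [a, c, b] [c, a, b] := by
  exact Relation.EqvGen.rel _ _ (KStep.k1 [] [] a b c h1 h2)

theorem swap_right {a b c : ℕ} (h1 : a < b) (h2 : b ≤ c) : KEquiv [b, a, c] [b, c, a] := by
  exact Relation.EqvGen.rel _ _ (KStep.k2 [] [] a b c h1 h2)

theorem filter_le {v w : List ℕ} (u : ℕ) (h : KEquiv v w) :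
    KEquiv (v.filter (· ≤ u)) (w.filter (· ≤ u)) := by
  induction h with
  | rel v w h =>
    cases h with
    | k1 x y a b c h1 h2 =>
      simp only [List.filter_append]
      refine append_context _ _ ?_
      by_cases hc : c ≤ u
      · simpa [hc, (by omega : a ≤ u), (by omega : b ≤ u)] using swap_left h1 h2
      · simpa [List.filter_cons, hc] using refl _
    | k2 x y a b c h1 h2 =>
      simp only [List.filter_append]
      refine append_context _ _ ?_
      by_cases hc : c ≤ u
      · simpa [hc, (by omega : a ≤ u), (by omega : b ≤ u)] using swap_right h1 h2
      · simpa [List.filter_cons, hc] using refl _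
  | refl v => exact refl _
  | symm v w _ ih => exact ih.symm
  | trans v w z _ _ ih1 ih2 => exact ih1.trans ih2

theorem replicate_comm {u : ℕ} {w : List ℕ} (h : KEquiv ([u] ++ w) (w ++ [u])) (n : ℕ) :
    KEquiv (List.replicate n u ++ w) (w ++ List.replicate n u) := by
  induction n with
  | zero => simpa using refl w
  | succ n ih =>
    have h1 : KEquiv (u :: (List.replicate n u ++ w)) (u :: (w ++ List.replicate n u)) := ih.cons u
    have h2 := h.append_right (List.replicate n u)
    simpa [List.replicate_succ] using h1.trans (by simpa using h2)

/-- A small letter moves left through a row, up to its first entry. -/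
theorem cons_append_singleton {l x : ℕ} {R : List ℕ} (hx : x < l)
    (hR : (l :: R).Pairwise (· ≤ ·)) : KEquiv (l :: (R ++ [x])) (l :: x :: R) := by
  induction R generalizing l with
  | nil => exact refl _
  | cons r R ih =>
    have hlr : l ≤ r := by simp_all
    have h1 := (ih (by omega) (List.pairwise_cons.1 hR).2).cons l
    have h2 := ((swap_right hx hlr).symm).append_right R
    exact h1.trans (by simpa using h2)

end KEquiv

/-! ### Row insertion -/

theorem mem_of_mem_rowInsert {x z : ℕ} {R : List ℕ} (h : z ∈ (rowInsert x R).1) :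
    z = x ∨ z ∈ R := by
  induction R with
  | nil => simpa [rowInsert] using h
  | cons y R ih =>
    by_cases hxy : x < y
    · simp [rowInsert, hxy] at h ⊢; tauto
    · simp [rowInsert, hxy] at h ⊢; tauto

theorem mem_rowInsert_self (x : ℕ) (R : List ℕ) : x ∈ (rowInsert x R).1 := by
  induction R with
  | nil => simp [rowInsert]
  | cons y R ih => by_cases hxy : x < y <;> simp [rowInsert, hxy, ih]

theorem mem_of_rowInsert_eq_some {x y : ℕ} {R : List ℕ} (h : (rowInsert x R).2 = some y) :
    y ∈ R ∧ x < y := by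
  induction R with
  | nil => simp [rowInsert] at h
  | cons z R ih =>
    by_cases hxy : x < z
    · simp [rowInsert, hxy] at h ⊢; subst h; simp [hxy]
    · simp [rowInsert, hxy] at h ⊢; have := ih h; tauto

theorem pairwise_rowInsert {x : ℕ} {R : List ℕ} (h : R.Pairwise (· ≤ ·)) :
    (rowInsert x R).1.Pairwise (· ≤ ·) := by
  induction R with
  | nil => simp [rowInsert]
  | cons y R ih =>
    rw [List.pairwise_cons] at h
    by_cases hxy : x < y
    · simp only [rowInsert, hxy, if_true, List.pairwise_cons]
      exact ⟨fun z hz => hxy.le.trans (h.1 z hz), h.2⟩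
    · simp only [rowInsert, hxy, if_false, List.pairwise_cons]
      refine ⟨fun z hz => ?_, ih h.2⟩
      rcases mem_of_mem_rowInsert hz with rfl | hz
      · omega
      · exact h.1 z hz

theorem exists_rowInsert_eq_some {b c : ℕ} {R : List ℕ} (hR : R.Pairwise (· ≤ ·)) (hc : c ∈ R)
    (hbc : b < c) : ∃ e ≤ c, (rowInsert b R).2 = some e := by
  induction R with
  | nil => simp at hc
  | cons y R ih =>
    rw [List.pairwise_cons] at hR
    by_cases hby : b < y
    · refine ⟨y, ?_, by simp [rowInsert, hby]⟩
      rcases List.mem_cons.1 hc with rfl | hc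
      · exact le_rfl
      · exact hR.1 c hc
    · obtain ⟨e, he, h⟩ := ih hR.2 (by
        rcases List.mem_cons.1 hc with rfl | hc
        · exact absurd hbc hby
        · exact hc)
      exact ⟨e, he, by simp [rowInsert, hby, h]⟩

theorem exists_bump_le_of_bump {b c e : ℕ} {R : List ℕ} (hR : R.Pairwise (· ≤ ·)) (hbc : b ≤ c)
    (h : (rowInsert c (rowInsert b R).1).2 = some e) :
    ∃ d ≤ e, (rowInsert b R).2 = some d := by
  induction R with
  | nil => simp [rowInsert, not_lt.2 hbc] at h
  | cons y R ih =>
    rw [List.pairwise_cons] at hR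
    by_cases hby : b < y
    · simp only [rowInsert, hby, if_true, not_lt.2 hbc, if_false] at h ⊢
      exact ⟨y, hR.1 e (mem_of_rowInsert_eq_some h).1, rfl⟩
    · have hcy : ¬ c < y := by omega
      simp only [rowInsert, hby, if_false, hcy] at h ⊢
      exact ih hR.2 h

theorem rowInsert_sublist {x : ℕ} {A B : List ℕ} (hAB : A.Sublist B) (hB : B.Pairwise (· ≤ ·)) :
    (rowInsert x A).1.Sublist (rowInsert x B).1 := by
  induction hAB with
  | slnil => exact List.Sublist.refl _
  | @cons A B z h ih =>
    rw [List.pairwise_cons] at hB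
    by_cases hxz : x < z
    · simp only [rowInsert, hxz, if_true]
      cases A with
      | nil => simp [rowInsert]
      | cons y A =>
        have hzy : z ≤ y := hB.1 y (h.subset (by simp))
        have hxy : x < y := by omega
        simp only [rowInsert, hxy, if_true]
        exact ((List.sublist_cons_self y A).trans h).cons_cons x
    · simp only [rowInsert, hxz, if_false]
      exact (ih hB.2).cons z
  | @cons_cons A B z h ih =>
    rw [List.pairwise_cons] at hB
    by_cases hxz : x < z
    · simpa only [rowInsert, hxz, if_true] using h.cons_cons x
    · simpa only [rowInsert, hxz, if_false] using (ih hB.2).cons_cons z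

theorem countP_gt_rowInsert {x : ℕ} {R : List ℕ} (h : ∃ y ∈ R, x < y) :
    (rowInsert x R).1.countP (x < ·) < R.countP (x < ·) := by
  induction R with
  | nil => simp at h
  | cons y R ih =>
    by_cases hxy : x < y
    · simp [rowInsert, hxy]
    · have : ∃ z ∈ R, x < z := by simpa [hxy] using h
      simpa [rowInsert, hxy] using ih this

/-- Appending a letter to a row is equivalent to putting the bumped letter in front. -/
theorem kEquiv_rowInsert {x : ℕ} {R : List ℕ} (hR : R.Pairwise (· ≤ ·)) :
    KEquiv (R ++ [x]) ((rowInsert x R).2.toList ++ (rowInsert x R).1) := by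
  induction R with
  | nil => exact KEquiv.refl _
  | cons z R ih =>
    by_cases hxz : x < z
    · simpa [rowInsert, hxz] using KEquiv.cons_append_singleton hxz hR
    · rw [List.pairwise_cons] at hR
      have h := (ih hR.2).cons z
      simp only [rowInsert, hxz, if_false]
      cases hb : (rowInsert x R).2 with
      | none => simpa [hb] using h
      | some y =>
        simp only [hb, Option.toList_some, List.singleton_append] at h
        refine h.trans ?_
        have hxR := mem_rowInsert_self x R
        have hs := pairwise_rowInsert (x := x) hR.2
        have hmem : ∀ k ∈ (rowInsert x R).1, z ≤ k := fun k hk => by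
          rcases mem_of_mem_rowInsert hk with rfl | hk
          · omega
          · exact hR.1 k hk
        have hxy := (mem_of_rowInsert_eq_some hb).2
        revert hxR hs hmem
        cases (rowInsert x R).1 with
        | nil => simp
        | cons k K =>
          intro hxR hs hmem
          have hkx : k ≤ x := by
            rcases List.mem_cons.1 hxR with rfl | hxK
            · exact le_rfl
            · exact (List.pairwise_cons.1 hs).1 x hxK
          simpa using
            (KEquiv.swap_left (hmem k (by simp)) (show k < y by omega)).append_right K

/-- Insert a word into a row; returns the new row and the word of bumped letters. -/
def rowWord : List ℕ → List ℕ → List ℕ × List ℕ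
  | R, [] => (R, [])
  | R, x :: v => ((rowWord (rowInsert x R).1 v).1,
      (rowInsert x R).2.toList ++ (rowWord (rowInsert x R).1 v).2)

theorem rowWord_append (R v w : List ℕ) : rowWord R (v ++ w) =
    ((rowWord (rowWord R v).1 w).1, (rowWord R v).2 ++ (rowWord (rowWord R v).1 w).2) := by
  induction v generalizing R with
  | nil => rfl
  | cons x v ih => simp [rowWord, ih]

theorem pairwise_rowWord {R : List ℕ} (v : List ℕ) (h : R.Pairwise (· ≤ ·)) :
    (rowWord R v).1.Pairwise (· ≤ ·) := by
  induction v generalizing R with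
  | nil => exact h
  | cons x v ih => exact ih (pairwise_rowInsert h)

theorem rowWord_ne_nil {R : List ℕ} (v : List ℕ) (h : R ≠ []) : (rowWord R v).1 ≠ [] := by
  induction v generalizing R with
  | nil => exact h
  | cons x v ih => exact ih (List.ne_nil_of_mem (mem_rowInsert_self x R))

theorem rowWord_cons_of_le {y : ℕ} {R v : List ℕ} (h : ∀ x ∈ v, y ≤ x) :
    rowWord (y :: R) v = (y :: (rowWord R v).1, (rowWord R v).2) := by
  induction v generalizing R with
  | nil => rfl
  | cons x v ih =>
    have hx : ¬ x < y := not_lt.2 (h x (by simp))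
    simp [rowWord, rowInsert, hx, ih fun z hz => h z (by simp [hz])]

theorem rowWord_sublist {A B : List ℕ} (v : List ℕ) (hAB : A.Sublist B)
    (hB : B.Pairwise (· ≤ ·)) : (rowWord A v).1.Sublist (rowWord B v).1 := by
  induction v generalizing A B with
  | nil => exact hAB
  | cons x v ih => exact ih (rowInsert_sublist hAB hB) (pairwise_rowInsert hB)

theorem kEquiv_rowWord {R : List ℕ} (v : List ℕ) (hR : R.Pairwise (· ≤ ·)) :
    KEquiv (R ++ v) ((rowWord R v).2 ++ (rowWord R v).1) := by
  induction v generalizing R with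
  | nil => simpa [rowWord] using KEquiv.refl R
  | cons x v ih =>
    have h1 := (kEquiv_rowInsert (x := x) hR).append_right v
    have h2 := (ih (pairwise_rowInsert (x := x) hR)).append_left (rowInsert x R).2.toList
    simp only [List.append_assoc, List.singleton_append] at h1 h2
    simpa [rowWord] using h1.trans h2

theorem length_rowWord (R v : List ℕ) :
    (rowWord R v).1.length + (rowWord R v).2.length = R.length + v.length := by
  have key (x : ℕ) (R : List ℕ) : (rowInsert x R).1.length + (rowInsert x R).2.toList.length =
      R.length + 1 := by
    induction R with
    | nil => rfl
    | cons y R ih =>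
      by_cases hxy : x < y
      · simp [rowInsert, hxy]
      · simp [rowInsert, hxy]; omega
  induction v generalizing R with
  | nil => rfl
  | cons x v ih =>
    have h1 := ih (rowInsert x R).1
    have h2 := key x R
    simp only [rowWord, List.length_append, List.length_cons]
    omega

/-! ### Knuth invariance of row insertion -/

/-- Inserting `v` or `w` into `R` yields the same row and equivalent bumped words. -/
def SameInsert (R v w : List ℕ) : Prop :=
  (rowWord R v).1 = (rowWord R w).1 ∧ KEquiv (rowWord R v).2 (rowWord R w).2

theorem SameInsert.cons {y : ℕ} {R v w : List ℕ} (h : SameInsert R v w) (hv : ∀ x ∈ v, y ≤ x)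
    (hw : ∀ x ∈ w, y ≤ x) : SameInsert (y :: R) v w := by
  simpa [SameInsert, rowWord_cons_of_le hv, rowWord_cons_of_le hw] using h

theorem sameInsert_swap_left {R : List ℕ} {a b c : ℕ} (hR : R.Pairwise (· ≤ ·)) (hab : a ≤ b)
    (hbc : b < c) : SameInsert R [a, c, b] [c, a, b] := by
  induction R with
  | nil =>
    simp [SameInsert, rowWord, rowInsert, not_lt.2 hab, hbc, not_lt.2 (hab.trans hbc.le),
      hab.trans_lt hbc, KEquiv.refl]
  | cons y R ih =>
    have hR' := List.pairwise_cons.1 hR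
    by_cases hay : a < y
    · by_cases hcy : c < y
      · cases R with
        | nil =>
          simp [SameInsert, rowWord, rowInsert, hay, hcy, not_lt.2 hab, hbc,
            not_lt.2 (hab.trans hbc.le), hab.trans_lt hbc, KEquiv.refl]
        | cons z R =>
          have hyz : y ≤ z := hR'.1 z (by simp)
          simp only [SameInsert, rowWord, rowInsert, hay, hcy, not_lt.2 hab, hbc,
            not_lt.2 (hab.trans hbc.le), hab.trans_lt hbc, hcy.trans_le hyz,
            (hbc.trans hcy).trans_le hyz, if_true, if_false]
          simpa using (KEquiv.swap_right hcy hyz).symm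
      · have hs := pairwise_rowInsert (x := c) hR'.2
        obtain ⟨e, hec, he⟩ := exists_rowInsert_eq_some hs (mem_rowInsert_self c R) hbc
        have hye : y ≤ e := by
          rcases mem_of_mem_rowInsert (mem_of_rowInsert_eq_some he).1 with rfl | h
          · omega
          · exact hR'.1 e h
        simp only [SameInsert, rowWord, rowInsert, hay, hcy, not_lt.2 hab,
          not_lt.2 (hab.trans hbc.le), if_true, if_false, he, true_and]
        cases hd : (rowInsert c R).2 with
        | none => simpa using KEquiv.refl _
        | some d =>
          have := (mem_of_rowInsert_eq_some hd).2
          simpa using KEquiv.swap_left hye (show e < d by omega)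
    · refine (ih hR'.2).cons ?_ ?_ <;> simp <;> omega

theorem sameInsert_swap_right {R : List ℕ} {a b c : ℕ} (hR : R.Pairwise (· ≤ ·)) (hab : a < b)
    (hbc : b ≤ c) : SameInsert R [b, a, c] [b, c, a] := by
  have hac : ¬ c < a := by omega
  induction R with
  | nil => simp [SameInsert, rowWord, rowInsert, hab, not_lt.2 hbc, hac, KEquiv.refl]
  | cons y R ih =>
    have hR' := List.pairwise_cons.1 hR
    by_cases hay : a < y
    · by_cases hby : b < y
      · simp only [SameInsert, rowWord, rowInsert, hby, hab, not_lt.2 hbc, hac,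
          if_true, if_false, true_and]
        cases hd : (rowInsert c R).2 with
        | none => simpa using KEquiv.refl _
        | some d =>
          simpa using KEquiv.swap_right hby (hR'.1 d (mem_of_rowInsert_eq_some hd).1)
      · have hcy : ¬ c < y := by omega
        simp only [SameInsert, rowWord, rowInsert, hay, hby, hcy, hac, if_true, if_false, true_and]
        cases he : (rowInsert c (rowInsert b R).1).2 with
        | none => simpa using KEquiv.refl _
        | some e =>
          obtain ⟨d, hde, hd⟩ := exists_bump_le_of_bump hR'.2 hbc he
          have := (mem_of_rowInsert_eq_some hd).2
          simpa [hd] using KEquiv.swap_right (show y < d by omega) hde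
    · refine (ih hR'.2).cons ?_ ?_ <;> simp <;> omega

theorem SameInsert.append_context {R v w : List ℕ} (x y : List ℕ)
    (h : SameInsert (rowWord R x).1 v w) : SameInsert R (x ++ v ++ y) (x ++ w ++ y) := by
  obtain ⟨h1, h2⟩ := h
  simp only [SameInsert, rowWord_append, h1, true_and]
  exact h2.append_context _ _

theorem KEquiv.sameInsert {v w : List ℕ} (h : KEquiv v w) : SameInsert [] v w := by
  induction h with
  | rel v w h =>
    cases h with
    | k1 x y a b c h1 h2 =>
      exact (sameInsert_swap_left (pairwise_rowWord x .nil) h1 h2).append_context x y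
    | k2 x y a b c h1 h2 =>
      exact (sameInsert_swap_right (pairwise_rowWord x .nil) h1 h2).append_context x y
  | refl v => exact ⟨rfl, refl _⟩
  | symm v w _ ih => exact ⟨ih.1.symm, ih.2.symm⟩
  | trans v w z _ _ ih1 ih2 => exact ⟨ih1.1.trans ih2.1, ih1.2.trans ih2.2⟩

/-! ### The rows of the insertion tableau -/

theorem foldl_tInsert_cons (R : List ℕ) (T : List (List ℕ)) (v : List ℕ) :
    v.foldl (fun t x => tInsert x t) (R :: T) =
      (rowWord R v).1 :: (rowWord R v).2.foldl (fun t x => tInsert x t) T := by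
  induction v generalizing R T with
  | nil => rfl
  | cons x v ih =>
    have h : tInsert x (R :: T) = (rowInsert x R).1 ::
        (rowInsert x R).2.toList.foldl (fun t x => tInsert x t) T := by
      rw [tInsert]
      split <;> rename_i heq <;> simp [heq]
    rw [List.foldl_cons, h, ih, rowWord, List.foldl_append]

theorem P_of_ne_nil {v : List ℕ} (hv : v ≠ []) : P v = (rowWord [] v).1 :: P (rowWord [] v).2 := by
  cases v with
  | nil => exact absurd rfl hv
  | cons x v => simpa [P, tInsert, rowWord, rowInsert] using foldl_tInsert_cons [x] [] v

theorem row_zero (v : List ℕ) : row v 0 = (rowWord [] v).1 := by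
  by_cases hv : v = []
  · subst hv; rfl
  · simp [row, P_of_ne_nil hv]

theorem row_succ (v : List ℕ) (i : ℕ) : row v (i + 1) = row (rowWord [] v).2 i := by
  by_cases hv : v = []
  · subst hv; rfl
  · simp [row, P_of_ne_nil hv]

theorem KEquiv.row_eq {v w : List ℕ} (h : KEquiv v w) (i : ℕ) : row v i = row w i := by
  induction i generalizing v w with
  | zero => simpa [row_zero] using h.sameInsert.1
  | succ i ih => simpa [row_succ] using ih h.sameInsert.2

/-- The row reading word of a tableau, from the bottom row to the top row. -/
def reading : List (List ℕ) → List ℕ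
  | [] => []
  | R :: T => reading T ++ R

theorem kEquiv_reading_P (v : List ℕ) : KEquiv v (reading (P v)) := by
  induction hn : v.length using Nat.strong_induction_on generalizing v with
  | _ n ih =>
    by_cases hv : v = []
    · subst hv; exact KEquiv.refl _
    · rw [P_of_ne_nil hv, reading]
      have hlen := length_rowWord [] v
      have hpos : 0 < (rowWord [] v).1.length := by
        rw [List.length_pos_iff]
        cases v with
        | nil => exact absurd rfl hv
        | cons x v => exact rowWord_ne_nil v (List.cons_ne_nil x [])
      have h1 := kEquiv_rowWord v List.Pairwise.nil
      refine KEquiv.trans (by simpa using h1) ((ih _ ?_ _ rfl).append_right _)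
      simp at hlen
      omega

/-! ### Semistandard tableaux -/

/-- The row `X` may stand directly below the row `Y` in a semistandard tableau. -/
def Below : List ℕ → List ℕ → Prop
  | [], _ => True
  | _ :: _, [] => False
  | x :: X, y :: Y => y < x ∧ Below X Y

theorem Below.nil (Y : List ℕ) : Below [] Y := by simp [Below]

theorem Below.length_le {X Y : List ℕ} (h : Below X Y) : X.length ≤ Y.length := by
  induction X generalizing Y with
  | nil => simp
  | cons x X ih =>
    cases Y with
    | nil => exact h.elim
    | cons y Y => simpa using ih h.2

theorem Below.append_right {X Y : List ℕ} (h : Below X Y) (Z : List ℕ) : Below X (Y ++ Z) := by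
  induction X generalizing Y with
  | nil => exact Below.nil _
  | cons x X ih =>
    cases Y with
    | nil => exact h.elim
    | cons y Y => exact ⟨h.1, ih h.2⟩

theorem Below.of_append {L B A C : List ℕ} (h : Below (L ++ B) (A ++ C))
    (hl : L.length = A.length) : Below L A ∧ Below B C := by
  induction L generalizing A with
  | nil =>
    obtain rfl : A = [] := by simpa using hl.symm
    exact ⟨Below.nil _, h⟩
  | cons l L ih =>
    cases A with
    | nil => simp at hl
    | cons a A => exact ⟨⟨h.1, (ih h.2 (by simpa using hl)).1⟩, (ih h.2 (by simpa using hl)).2⟩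

theorem Below.filter {X Y : List ℕ} {p : ℕ → Bool} (hp : ∀ x y, x ≤ y → p y → p x)
    (h : Below X Y) (hX : X.Pairwise (· ≤ ·)) : Below (X.filter p) (Y.filter p) := by
  induction X generalizing Y with
  | nil => exact Below.nil _
  | cons x X ih =>
    cases Y with
    | nil => exact h.elim
    | cons y Y =>
      rw [List.pairwise_cons] at hX
      by_cases hx : p x
      · simpa [List.filter_cons, hx, hp y x h.1.le hx] using ⟨h.1, ih h.2 hX.2⟩
      · have : (x :: X).filter p = [] := by
          simp only [List.filter_eq_nil_iff, List.mem_cons, forall_eq_or_imp]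
          exact ⟨hx, fun z hz hpz => hx (hp x z (hX.1 z hz) hpz)⟩
        rw [this]
        exact Below.nil _

theorem Below.append_replicate {X A : List ℕ} {u : ℕ} (h : Below X A) (hA : ∀ a ∈ A, a < u) :
    Below (X ++ List.replicate (A.length - X.length) u) A := by
  induction A generalizing X with
  | nil =>
    cases X with
    | nil => exact Below.nil _
    | cons x X => exact h.elim
  | cons a A ih =>
    have hA' : ∀ a ∈ A, a < u := fun b hb => hA b (by simp [hb])
    cases X with
    | nil => exact ⟨hA a (by simp), by simpa using ih (Below.nil A) hA'⟩
    | cons x X => exact ⟨h.1, by simpa using ih h.2 hA'⟩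

theorem Below.rowInsert {X R : List ℕ} (h : Below X R) (x : ℕ) : Below X (rowInsert x R).1 := by
  induction R generalizing X with
  | nil =>
    cases X with
    | nil => exact Below.nil _
    | cons z X => exact h.elim
  | cons r R ih =>
    cases X with
    | nil => exact Below.nil _
    | cons z X =>
      by_cases hxr : x < r
      · simp only [Plactic.rowInsert, hxr, if_true]
        exact ⟨hxr.trans h.1, h.2⟩
      · simp only [Plactic.rowInsert, hxr, if_false]
        exact ⟨h.1, ih h.2⟩

theorem Below.rowInsert_bump {S R : List ℕ} {x y : ℕ} (h : Below S R)
    (hy : (Plactic.rowInsert x R).2 = some y) :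
    Below (Plactic.rowInsert y S).1 (Plactic.rowInsert x R).1 := by
  induction R generalizing S with
  | nil => simp [Plactic.rowInsert] at hy
  | cons r R ih =>
    by_cases hxr : x < r
    · simp only [Plactic.rowInsert, hxr, if_true, Option.some.injEq] at hy ⊢
      subst hy
      cases S with
      | nil => exact ⟨hxr, Below.nil _⟩
      | cons s S =>
        simp only [Plactic.rowInsert, h.1, if_true]
        exact ⟨hxr, h.2⟩
    · simp only [Plactic.rowInsert, hxr, if_false] at hy ⊢
      have hxy := (mem_of_rowInsert_eq_some hy).2
      have hry : r < y := by omega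
      cases S with
      | nil => exact ⟨hry, Below.nil _⟩
      | cons s S =>
        by_cases hys : y < s
        · simp only [Plactic.rowInsert, hys, if_true]
          exact ⟨hry, h.2.rowInsert x⟩
        · simp only [Plactic.rowInsert, hys, if_false]
          exact ⟨h.1, ih h.2 hy⟩

/-- Semistandardness of a list of rows, of which the last ones may be empty. -/
def IsTableau : List (List ℕ) → Prop
  | [] => True
  | R :: T => R.Pairwise (· ≤ ·) ∧ Below (T.headD []) R ∧ IsTableau T

theorem IsTableau.pairwise_headD {T : List (List ℕ)} (h : IsTableau T) :
    (T.headD []).Pairwise (· ≤ ·) := by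
  cases T with
  | nil => exact List.Pairwise.nil
  | cons R T => exact h.1

theorem headD_tInsert (x : ℕ) (T : List (List ℕ)) :
    (tInsert x T).headD [] = (rowInsert x (T.headD [])).1 := by
  cases T with
  | nil => rfl
  | cons R T =>
    rw [tInsert]
    split <;> rename_i heq <;> simp [heq]

theorem IsTableau.tInsert {T : List (List ℕ)} (h : IsTableau T) (x : ℕ) :
    IsTableau (tInsert x T) := by
  induction T generalizing x with
  | nil => simp [Plactic.tInsert, IsTableau, Below]
  | cons R T ih =>
    obtain ⟨hR, hb, hT⟩ := h
    have hs := pairwise_rowInsert (x := x) hR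
    have hb' := hb.rowInsert x
    have hbump (y : ℕ) := hb.rowInsert_bump (x := x) (y := y)
    rw [Plactic.tInsert]
    split <;> rename_i heq <;> simp only [heq] at hs hb' hbump
    · exact ⟨hs, hb', hT⟩
    · refine ⟨hs, ?_, ih hT _⟩
      rw [headD_tInsert]
      exact hbump _ rfl

theorem isTableau_P (w : List ℕ) : IsTableau (P w) := by
  have key (T : List (List ℕ)) (hT : IsTableau T) :
      IsTableau (w.foldl (fun t x => tInsert x t) T) := by
    induction w generalizing T with
    | nil => exact hT
    | cons x w ih => exact ih _ (hT.tInsert x)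
  exact key [] trivial

theorem IsTableau.map_filter {T : List (List ℕ)} {p : ℕ → Bool}
    (hp : ∀ x y, x ≤ y → p y → p x) (h : IsTableau T) : IsTableau (T.map (List.filter p)) := by
  induction T with
  | nil => trivial
  | cons R T ih =>
    refine ⟨h.1.filter _, ?_, ih h.2.2⟩
    have : (T.map (List.filter p)).headD [] = (T.headD []).filter p := by cases T <;> simp
    rw [this]
    exact h.2.1.filter hp h.2.2.pairwise_headD

theorem getD_map_filter (p : ℕ → Bool) (T : List (List ℕ)) (i : ℕ) :
    (T.map (List.filter p)).getD i [] = (T.getD i []).filter p := by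
  simpa using List.getD_map (l := T) (d := []) (n := i) (List.filter p)

theorem filter_reading (p : ℕ → Bool) (T : List (List ℕ)) :
    (reading T).filter p = reading (T.map (List.filter p)) := by
  induction T with
  | nil => rfl
  | cons R T ih => simp [reading, ih]

theorem rowWord_of_below {X R : List ℕ} (h : Below X R) (hR : R.Pairwise (· ≤ ·)) :
    rowWord X R = (R, X) := by
  induction R generalizing X with
  | nil =>
    cases X with
    | nil => rfl
    | cons x X => exact h.elim
  | cons r R ih =>
    rw [List.pairwise_cons] at hR
    cases X with
    | nil => simp [rowWord, rowInsert, rowWord_cons_of_le hR.1, ih (Below.nil R) hR.2]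
    | cons x X => simp [rowWord, rowInsert, h.1, rowWord_cons_of_le hR.1, ih h.2 hR.2]

theorem IsTableau.rowWord_reading {T : List (List ℕ)} (h : IsTableau T) :
    rowWord [] (reading T) = (T.headD [], reading T.tail) := by
  induction T with
  | nil => rfl
  | cons R T ih =>
    rw [reading, rowWord_append, ih h.2.2, rowWord_of_below h.2.1 h.1]
    cases T <;> simp [reading]

theorem IsTableau.row_reading {T : List (List ℕ)} (h : IsTableau T) (i : ℕ) :
    row (reading T) i = T.getD i [] := by
  induction i generalizing T with
  | zero => cases T <;> simp [row_zero, h.rowWord_reading]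
  | succ i ih =>
    rw [row_succ, h.rowWord_reading]
    cases T with
    | nil => rfl
    | cons R T => simpa using ih h.2.2

/-! ### Exchanging pieces of adjacent rows -/

theorem KEquiv.append_append_comm {L Z A : List ℕ} (hl : L.length = A.length) (h : Below L A)
    (hs : (L ++ Z).Pairwise (· ≤ ·)) : KEquiv (L ++ (Z ++ A)) (L ++ (A ++ Z)) := by
  induction L generalizing A with
  | nil =>
    obtain rfl : A = [] := by simpa using hl.symm
    simpa using refl Z
  | cons l L ih =>
    cases A with
    | nil => simp at hl
    | cons a A =>
      have hs' : (l :: L).Pairwise (· ≤ ·) := hs.sublist (List.sublist_append_left _ _)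
      have h1 := (cons_append_singleton (R := L ++ Z) h.1 hs).append_right A
      have h2 := (ih (by simpa using hl) h.2 (List.pairwise_cons.1 hs).2).append_left [l, a]
      have h3 := (cons_append_singleton h.1 hs').symm.append_right (A ++ Z)
      simp only [List.append_assoc, List.cons_append, List.nil_append] at h1 h2 h3 ⊢
      exact (h1.trans h2).trans h3

theorem KEquiv.cons_append_comm {u : ℕ} {B C : List ℕ} (hC : (u :: C).Pairwise (· ≤ ·))
    (hB : B.Pairwise (· ≤ ·)) (hu : ∀ b ∈ B, u < b) (h : Below B C) :
    KEquiv (u :: (B ++ C)) (B ++ u :: C) := by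
  induction B generalizing u C with
  | nil => exact refl _
  | cons b B ih =>
    cases C with
    | nil => exact h.elim
    | cons c C =>
      have hub : u < b := hu b (by simp)
      have huc : u ≤ c := (List.pairwise_cons.1 hC).1 c (by simp)
      have hB' := List.pairwise_cons.1 hB
      have h1 := (cons_append_singleton h.1 hB).append_context [u] C
      have h2 := (swap_left huc h.1).append_right (B ++ C)
      have h3 := (ih (List.pairwise_cons.1 hC).2 hB'.2
        (fun x hx => h.1.trans_le (hB'.1 x hx)) h.2).append_left [b, u]
      have h4 := (cons_append_singleton hub hB).symm.append_right (c :: C)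
      simp only [List.append_assoc, List.cons_append, List.nil_append] at h1 h2 h3 h4 ⊢
      exact ((h1.trans h2).trans h3).trans h4

/-- A sorted row splits into its entries satisfying a downward closed condition and the rest. -/
theorem eq_filter_append_filter_not {R : List ℕ} {p : ℕ → Bool}
    (hp : ∀ x y, x ≤ y → p y → p x) (hR : R.Pairwise (· ≤ ·)) :
    R = R.filter p ++ R.filter (fun x => !p x) := by
  induction R with
  | nil => rfl
  | cons r R ih =>
    rw [List.pairwise_cons] at hR
    by_cases hr : p r
    · simpa [List.filter_cons, hr] using ih hR.2
    · have hR' : ∀ z ∈ R, ¬ p z := fun z hz hpz => hr (hp r z (hR.1 z hz) hpz)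
      have h1 : R.filter p = [] := by simpa [List.filter_eq_nil_iff] using hR'
      have h2 : R.filter (fun x => !p x) = R := by simpa [List.filter_eq_self] using hR'
      simp [hr, h1, h2]

theorem filter_lt_append_cons {R : List ℕ} (u : ℕ) (hR : R.Pairwise (· ≤ ·)) :
    R.filter (fun x => decide (x < u)) ++ u :: R.filter (fun x => !decide (x < u)) =
      R.filter (fun x => decide (x ≤ u)) ++ u :: R.filter (fun x => !decide (x ≤ u)) := by
  induction R with
  | nil => rfl
  | cons r R ih =>
    rw [List.pairwise_cons] at hR
    have ih := ih hR.2
    rcases lt_trichotomy r u with h | rfl | h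
    · simpa [List.filter_cons, h, h.le, not_le.2 h] using ih
    · have h1 : R.filter (fun x => decide (x < r)) = [] := by
        simpa [List.filter_eq_nil_iff] using hR.1
      simpa [List.filter_cons, h1] using ih
    · have h1 : R.filter (fun x => decide (x < u)) = [] := by
        simp only [List.filter_eq_nil_iff, decide_eq_true_eq, not_lt]
        exact fun x hx => h.le.trans (hR.1 x hx)
      have h2 : R.filter (fun x => decide (x ≤ u)) = [] := by
        simp only [List.filter_eq_nil_iff, decide_eq_true_eq, not_le]
        exact fun x hx => h.trans_le (hR.1 x hx)
      have h3 : R.filter (fun x => !decide (x < u)) = R.filter (fun x => !decide (x ≤ u)) := by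
        refine List.filter_congr fun x hx => ?_
        have := hR.1 x hx
        rw [decide_eq_false (by omega : ¬ x < u), decide_eq_false (by omega : ¬ x ≤ u)]
      rw [List.filter_cons_of_neg (by simpa using h.le),
        List.filter_cons_of_pos (by simpa using h.le),
        List.filter_cons_of_neg (by simpa using h), List.filter_cons_of_pos (by simpa using h),
        h1, h2, h3]

/-- A letter `u` between the parts `L` and `B` of a row moves to the row `A ++ C` above it. -/
theorem exchange {u : ℕ} {L B A C : List ℕ} (hlen : L.length = A.length)
    (hS : (L ++ B).Pairwise (· ≤ ·)) (hC : C.Pairwise (· ≤ ·)) (hLu : ∀ x ∈ L, x ≤ u)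
    (hBu : ∀ x ∈ B, u < x) (hCu : ∀ x ∈ C, u ≤ x) (h : Below (L ++ B) (A ++ C)) :
    KEquiv (L ++ u :: B ++ (A ++ C)) (L ++ B ++ (A ++ u :: C)) := by
  obtain ⟨hLA, hBC⟩ := h.of_append hlen
  have hS' := List.pairwise_append.1 hS
  have hs : (L ++ u :: B).Pairwise (· ≤ ·) := by
    refine List.pairwise_append.2 ⟨hS'.1, List.pairwise_cons.2
      ⟨fun b hb => (hBu b hb).le, hS'.2.1⟩, fun x hx y hy => ?_⟩
    rcases List.mem_cons.1 hy with rfl | hy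
    · exact hLu x hx
    · exact hS'.2.2 x hx y hy
  have h1 := (KEquiv.append_append_comm hlen hLA hs).append_right C
  have h2 := (KEquiv.cons_append_comm (List.pairwise_cons.2 ⟨hCu, hC⟩) hS'.2.1 hBu
    hBC).append_left (L ++ A)
  have h3 := (KEquiv.append_append_comm hlen hLA hS).symm.append_right (u :: C)
  simp only [List.append_assoc, List.cons_append] at h1 h2 h3 ⊢
  exact (h1.trans h2).trans h3

/-- Under the counting condition, left multiplication by `u` inserts `u` into the top row. -/
theorem kEquiv_cons_reading {u : ℕ} {R : List ℕ} {T : List (List ℕ)} (hT : IsTableau (R :: T))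
    (h : ∀ i, ((R :: T).getD i []).countP (fun x => decide (x < u)) =
      ((R :: T).getD (i + 1) []).countP (fun x => decide (x ≤ u))) :
    KEquiv (u :: reading (R :: T)) (reading T ++ (R.filter (fun x => decide (x < u)) ++
      u :: R.filter (fun x => !decide (x < u)))) := by
  have hlt : ∀ x y, x ≤ y → decide (y < u) → decide (x < u) := by simp; omega
  have hle : ∀ x y, x ≤ y → decide (y ≤ u) → decide (x ≤ u) := by simp; omega
  induction T generalizing R with
  | nil =>
    have h0 := h 0
    simp only [List.getD_cons_zero, List.countP_eq_length_filter, List.getD_cons_succ,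
      List.getD_nil, List.filter_nil, List.length_nil, List.length_eq_zero_iff] at h0
    have := eq_filter_append_filter_not hlt hT.1
    rw [h0, List.nil_append] at this
    rw [h0, ← this]
    exact KEquiv.refl _
  | cons S T ih =>
    obtain ⟨hR, hSR, hST⟩ := hT
    have hS := hST.1
    have h0 := h 0
    simp only [List.getD_cons_zero, List.countP_eq_length_filter, List.getD_cons_succ] at h0
    have hRs := eq_filter_append_filter_not hlt hR
    have hSs := eq_filter_append_filter_not hle hS
    have ih := (ih hST fun i => h (i + 1)).append_right R
    rw [filter_lt_append_cons u hS] at ih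
    simp only [List.headD_cons] at hSR
    rw [reading, ← List.cons_append]
    refine ih.trans ?_
    have hC : ∀ x ∈ R.filter (fun x => !decide (x < u)), u ≤ x := by simp
    have hL : ∀ x ∈ S.filter (fun x => decide (x ≤ u)), x ≤ u := by simp
    have hB : ∀ x ∈ S.filter (fun x => !decide (x ≤ u)), u < x := by simp
    rw [reading]
    have hex := (exchange h0.symm (hSs ▸ hS) (hR.filter _) hL hB hC
      (hRs ▸ hSs ▸ hSR)).append_left (reading T)
    rw [← hSs, ← hRs] at hex
    simpa only [List.append_assoc] using hex

/-! ### Multiplication by a high power of the largest letter -/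

/-- Fill a tableau with a horizontal strip of letters `u`, the longest possible below the top row,
so that the top row has length `n`. -/
def fill (u : ℕ) : ℕ → List (List ℕ) → List (List ℕ)
  | n, [] => [List.replicate n u]
  | n, A :: T => (A ++ List.replicate (n - A.length) u) :: fill u A.length T

theorem fill_eq_cons (u n : ℕ) (T : List (List ℕ)) : fill u n T =
    (T.headD [] ++ List.replicate (n - (T.headD []).length) u) :: (fill u 0 T).tail := by
  cases T <;> simp [fill]

theorem pairwise_append_replicate {A : List ℕ} {u : ℕ} (n : ℕ) (hA : A.Pairwise (· ≤ ·))
    (hu : ∀ a ∈ A, a ≤ u) : (A ++ List.replicate n u).Pairwise (· ≤ ·) := by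
  refine List.pairwise_append.2 ⟨hA, by simp [List.pairwise_replicate], fun x hx y hy => ?_⟩
  rw [List.eq_of_mem_replicate hy]
  exact hu x hx

theorem isTableau_fill {u n : ℕ} {T : List (List ℕ)} (hT : IsTableau T)
    (hu : ∀ A ∈ T, ∀ a ∈ A, a < u) : IsTableau (fill u n T) := by
  induction T generalizing n with
  | nil => simp [fill, IsTableau, Below, List.pairwise_replicate]
  | cons A T ih =>
    have hA := hu A (by simp)
    refine ⟨pairwise_append_replicate _ hT.1 fun a ha => (hA a ha).le, ?_,
      ih hT.2.2 fun B hB => hu B (by simp [hB])⟩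
    rw [fill_eq_cons]
    exact (hT.2.1.append_replicate hA).append_right _

theorem length_getD_fill {u n : ℕ} {T : List (List ℕ)} (hT : IsTableau T) (i : ℕ) :
    ((fill u n T).getD (i + 1) []).length = (T.getD i []).length := by
  induction i generalizing n T with
  | zero =>
    cases T with
    | nil => simp [fill]
    | cons A T =>
      have := hT.2.1.length_le
      rw [fill, List.getD_cons_succ, fill_eq_cons]
      simp only [List.getD_cons_zero, List.length_append, List.length_replicate]
      omega
  | succ i ih =>
    cases T with
    | nil => simp [fill]
    | cons A T => simpa [fill] using ih hT.2.2

theorem kEquiv_reading_fill {u n k : ℕ} {A : List ℕ} {T : List (List ℕ)}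
    (hT : IsTableau (A :: T)) (hA : ∀ a ∈ A, a < u) (hTu : ∀ a ∈ T.headD [], a < u)
    (hn : A.length ≤ n) :
    KEquiv (reading (fill u n T) ++ (A ++ List.replicate k u))
      (reading (fill u (n + k) (A :: T))) := by
  have hlen := hT.2.1.length_le
  rw [fill, reading, fill_eq_cons u n, fill_eq_cons u A.length, reading, reading]
  have h1 : List.replicate (n - (T.headD []).length) u =
      List.replicate (A.length - (T.headD []).length) u ++ List.replicate (n - A.length) u := by
    rw [List.replicate_append_replicate]
    congr 1
    omega
  have h2 : List.replicate (n + k - A.length) u =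
      List.replicate (n - A.length) u ++ List.replicate k u := by
    rw [List.replicate_append_replicate]
    congr 1
    omega
  have hs : (T.headD [] ++ List.replicate (A.length - (T.headD []).length) u ++
      List.replicate (n - A.length) u).Pairwise (· ≤ ·) := by
    rw [List.append_assoc, List.replicate_append_replicate]
    exact pairwise_append_replicate _ hT.2.2.pairwise_headD fun a ha => (hTu a ha).le
  have hl : (T.headD [] ++ List.replicate (A.length - (T.headD []).length) u).length =
      A.length := by
    rw [List.length_append, List.length_replicate]
    omega
  have h := (KEquiv.append_append_comm hl (hT.2.1.append_replicate hA)
    hs).append_context (reading (fill u 0 T).tail) (List.replicate k u)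
  rw [h1, h2]
  simpa only [List.append_assoc] using h

theorem exists_kEquiv_reading_fill {u N : ℕ} {T : List (List ℕ)} (hT : IsTableau T)
    (hu : ∀ R ∈ T, ∀ x ∈ R, x ≤ u) (hN : ∀ R ∈ T, R.length ≤ N) :
    ∃ n ≥ N, KEquiv (List.replicate N u ++ reading T)
      (reading (fill u n (T.map (List.filter fun x => decide (x < u))))) := by
  have hlt : ∀ x y, x ≤ y → decide (y < u) → decide (x < u) := by simp; omega
  induction T with
  | nil => exact ⟨N, le_rfl, by simpa [fill, reading] using KEquiv.refl _⟩
  | cons R T ih =>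
    obtain ⟨n, hn, h⟩ := ih hT.2.2 (fun S hS => hu S (by simp [hS])) fun S hS => hN S (by simp [hS])
    have hR := eq_filter_append_filter_not hlt hT.1
    have hrep : R.filter (fun x => !decide (x < u)) =
        List.replicate (R.filter (fun x => !decide (x < u))).length u := by
      refine List.eq_replicate_iff.2 ⟨rfl, fun x hx => ?_⟩
      have h1 := hu R (by simp) x (List.mem_of_mem_filter hx)
      have h2 : ¬ x < u := by simpa using (List.mem_filter.1 hx).2
      omega
    have hRN := hN R (by simp)
    have hlen := List.length_filter_le (fun x => decide (x < u)) R
    refine ⟨n + (R.filter (fun x => !decide (x < u))).length, by omega, ?_⟩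
    have h1 := h.append_right R
    nth_rewrite 2 [hR] at h1
    rw [hrep] at h1
    rw [reading, ← List.append_assoc]
    refine h1.trans ?_
    refine kEquiv_reading_fill (hT.map_filter hlt) (by simp) ?_ (by omega)
    cases T <;> simp

/-! ### The centralizer of a letter -/

theorem le_of_mem_row_zero {u : ℕ} {w : List ℕ} (h : KEquiv ([u] ++ w) (w ++ [u])) :
    ∀ x ∈ row w 0, x ≤ u := by
  by_contra! hx
  have h0 := h.row_eq 0
  rw [row_zero, row_zero, rowWord_append [] w] at h0
  rw [row_zero] at hx
  have h1 := (rowWord_sublist w (List.nil_sublist [u]) (by simp)).countP_le (p := (u < ·))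
  have h2 := countP_gt_rowInsert hx
  have h3 : (rowWord [u] w).1 = (rowInsert u (rowWord [] w).1).1 := h0
  rw [h3] at h1
  omega

theorem length_le_length_reading {R : List ℕ} {T : List (List ℕ)} (h : R ∈ T) :
    R.length ≤ (reading T).length := by
  induction T with
  | nil => simp at h
  | cons S T ih =>
    rw [reading, List.length_append]
    rcases List.mem_cons.1 h with rfl | h
    · omega
    · have := ih h
      omega

theorem countP_row_eq {u : ℕ} {w : List ℕ} (h : KEquiv ([u] ++ w) (w ++ [u])) (i : ℕ) :
    (row w i).countP (fun x => decide (x < u)) =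
      (row w (i + 1)).countP (fun x => decide (x ≤ u)) := by
  have hlt : ∀ x y, x ≤ y → decide (y < u) → decide (x < u) := by simp; omega
  have hle : ∀ x y, x ≤ y → decide (y ≤ u) → decide (x ≤ u) := by simp; omega
  have hw := kEquiv_reading_P w
  have hcomm := (((hw.append_left [u]).symm.trans h).trans (hw.append_right [u])).filter_le u
  simp only [List.filter_append, filter_reading] at hcomm
  rw [show [u].filter (fun x => decide (x ≤ u)) = [u] by simp] at hcomm
  set T := (P w).map (List.filter fun x => decide (x ≤ u)) with hTdef
  have hT : IsTableau T := (isTableau_P w).map_filter hle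
  have hTu : ∀ R ∈ T, ∀ x ∈ R, x ≤ u := by
    intro R hR x hx
    obtain ⟨S, -, rfl⟩ := List.mem_map.1 hR
    simpa using (List.mem_filter.1 hx).2
  have hget (j : ℕ) : T.getD j [] = (row w j).filter fun x => decide (x ≤ u) := by
    rw [hTdef, getD_map_filter, row]
  obtain ⟨n, -, hn⟩ := exists_kEquiv_reading_fill hT hTu fun R => length_le_length_reading
  have hrows := (hn.symm.trans (hcomm.replicate_comm _)).row_eq (i + 1)
  have hT' := hT.map_filter hlt
  have hright : row (reading T ++ List.replicate (reading T).length u) (i + 1) =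
      T.getD (i + 1) [] := by
    cases hTc : T with
    | nil => rfl
    | cons R S =>
      rw [hTc] at hT hTu
      have h1 : IsTableau ((R ++ List.replicate (reading (R :: S)).length u) :: S) :=
        ⟨pairwise_append_replicate _ hT.1 (hTu R (by simp)), hT.2.1.append_right _, hT.2.2⟩
      simpa [reading] using h1.row_reading (i + 1)
  rw [hright, (isTableau_fill hT' (by simp)).row_reading] at hrows
  have hlen := congrArg List.length hrows
  rw [length_getD_fill hT', hget] at hlen
  have hget' : (T.map (List.filter fun x => decide (x < u))).getD i [] =
      (row w i).filter fun x => decide (x < u) := by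
    rw [getD_map_filter, hget, List.filter_filter]
    refine List.filter_congr fun x _ => ?_
    simpa using le_of_lt
  rw [hget'] at hlen
  simpa [List.countP_eq_length_filter] using hlen

theorem kEquiv_of_countP_row {u : ℕ} {w : List ℕ} (h0 : ∀ x ∈ row w 0, x ≤ u)
    (h : ∀ i, (row w i).countP (fun x => decide (x < u)) =
      (row w (i + 1)).countP (fun x => decide (x ≤ u))) : KEquiv ([u] ++ w) (w ++ [u]) := by
  have hw := kEquiv_reading_P w
  refine (hw.append_left [u]).trans (KEquiv.trans ?_ (hw.append_right [u]).symm)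
  have hT := isTableau_P w
  unfold row at h h0
  cases hP : P w with
  | nil => exact KEquiv.refl _
  | cons R T =>
    rw [hP] at hT h h0
    refine (kEquiv_cons_reading hT h).trans (KEquiv.of_eq ?_)
    have hR : ∀ x ∈ R, x ≤ u := by simpa using h0
    rw [filter_lt_append_cons u hT.1, List.filter_eq_self.2 (by simpa using hR),
      List.filter_eq_nil_iff.2 (by simpa using hR), reading, List.append_assoc]

end Plactic

open Plactic in
theorem stmt_3 (u : ℕ) (hu : 0 < u) (w : List ℕ) (hw : ∀ x ∈ w, 0 < x) :
    w ∈ Cent [u] ↔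
      (∀ x ∈ row w 0, x ≤ u) ∧
      (∀ i, (row w i).countP (fun x => decide (x < u)) =
            (row w (i + 1)).countP (fun x => decide (x ≤ u))) :=
  ⟨fun h => ⟨le_of_mem_row_zero h, countP_row_eq h⟩, fun h => kEquiv_of_countP_row h.1 h.2⟩
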